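/- Let d1, d2 ≥ 1, α > 0 and let b : ℝ^{d1}×ℝ^{d2} → ℂ be continuous. Define ‖b‖_{Ċ^{0,α}_{x1}(BMO_{x2})} = sup_{x1 ≠ y1 ∈ ℝ^{d1}} ‖b(x1,·) − b(y1,·)‖_{BMO(ℝ^{d2})} / |x1−y1|^α. Then, with two-sided constants depending only on d1, d2, α, this quantity is comparable to sup{ ℓ(I1)^{−α} |R|⁻¹ osc^{1,1}(b,R) : R = I1×I2 a rectangle }, both quantities possibly +∞. -/

import Mathlib

/-!
Fix a cube `I2` and view `x1 ↦ b(x1,·) - ⟨b(x1,·)⟩_{I2}` as a continuous map `f` from `ℝ^{d1}` to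
`L¹(I2)`. The mean oscillation of `b(x1,·) - b(y1,·)` over `I2` is then `‖f x1 - f y1‖ / |I2|`,
while `osc^{1,1}(b, I1 × I2)` is `∫_{I1} ‖f - ⟨f⟩_{I1}‖`. The theorem is therefore the
equivalence of the Hölder and Campanato seminorms for maps into a metric space.

* Hölder controls oscillation (`osc11_le`): `f x1 - ⟨f⟩_{I1}` is the average over `y1 ∈ I1` of
  `f x1 - f y1`, and `|x1 - y1| ≤ √d1 ℓ(I1)`; Fubini's theorem moves the norm inside.
* Oscillation controls Hölder (`campanato`, `slice_diff_le`): the points attached to a cube and to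
  a subcube of half its side differ by `O(ℓ^α)` (`dist_anchor_le`). Summing the geometric series
  along cubes shrinking to `x` and to `y`, which start from comparable cubes of size `|x - y|`,
  bounds the distance of `f x` and `f y`; continuity of `f` identifies the limits.
-/

open MeasureTheory ENNReal Set

noncomputable section

/-- `Euc d` is the Euclidean space `ℝ^d`. -/
abbrev Euc (d : ℕ) := EuclideanSpace ℝ (Fin d)

/-- An axis-parallel cube in `ℝ^d`, described by its center and positive side length. -/
structure Cube (d : ℕ) where
  center : Euc d
  side : ℝ
  side_pos : 0 < side

/-- The set of points of a cube. -/
def Cube.carrier {d : ℕ} (I : Cube d) : Set (Euc d) :=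
  {x | ∀ i, |x i - I.center i| ≤ I.side / 2}

/-- The average `⟨b⟩_I` of a function over a cube. -/
def cubeAvg {d : ℕ} (b : Euc d → ℂ) (I : Cube d) : ℂ :=
  (volume I.carrier).toReal⁻¹ • ∫ x in I.carrier, b x

/-- The homogeneous Hölder seminorm `‖b‖_{Ċ^{0,α}}`, valued in `[0,∞]`. -/
def holderSeminorm {d : ℕ} (α : ℝ) (b : Euc d → ℂ) : ℝ≥0∞ :=
  ⨆ (x : Euc d) (y : Euc d) (_ : x ≠ y), ENNReal.ofReal (‖b x - b y‖ / dist x y ^ α)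
/-- The norm `‖b‖_{∙L^r}` = infimum over constants `c` of the `L^r` norm of `b - c`. -/
def dotLrNorm {d : ℕ} (r : ℝ) (b : Euc d → ℂ) : ℝ≥0∞ :=
  ⨅ c : ℂ, eLpNorm (fun x => b x - c) (ENNReal.ofReal r) volume

/-- The BMO norm of `b`, valued in `[0,∞]`. -/
def bmoNorm {d : ℕ} (b : Euc d → ℂ) : ℝ≥0∞ :=
  ⨆ I : Cube d, ENNReal.ofReal ((volume I.carrier).toReal⁻¹ * ∫ x in I.carrier, ‖b x - cubeAvg b I‖)

/-- The sharp maximal function `M♯b`. -/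
def sharpMaximal {d : ℕ} (b : Euc d → ℂ) (x : Euc d) : ℝ≥0∞ :=
  ⨆ (I : Cube d) (_ : x ∈ I.carrier),
    ENNReal.ofReal ((volume I.carrier).toReal⁻¹ * ∫ y in I.carrier, ‖b y - cubeAvg b I‖)

/-- A (countable) collection of cubes is sparse if each cube `Q` carries a measurable subset
`E Q` of at least half its measure, these subsets being pairwise disjoint. -/
def IsSparse {d : ℕ} (𝒮 : Set (Cube d)) : Prop :=
  𝒮.Countable ∧ ∃ E : Cube d → Set (Euc d),
    (∀ Q ∈ 𝒮, MeasurableSet (E Q) ∧ E Q ⊆ Q.carrier ∧ volume Q.carrier ≤ 2 * volume (E Q)) ∧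
    𝒮.PairwiseDisjoint E

/-- Average of `b (·, x2)` over a cube in the first factor. -/
def avgFst {d1 d2 : ℕ} (b : Euc d1 × Euc d2 → ℂ) (I1 : Cube d1) (x2 : Euc d2) : ℂ :=
  (volume I1.carrier).toReal⁻¹ • ∫ y1 in I1.carrier, b (y1, x2)

/-- Average of `b (x1, ·)` over a cube in the second factor. -/
def avgSnd {d1 d2 : ℕ} (b : Euc d1 × Euc d2 → ℂ) (I2 : Cube d2) (x1 : Euc d1) : ℂ :=
  (volume I2.carrier).toReal⁻¹ • ∫ y2 in I2.carrier, b (x1, y2)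

/-- Average of `b` over the rectangle `I1 × I2`. -/
def avgRect {d1 d2 : ℕ} (b : Euc d1 × Euc d2 → ℂ) (I1 : Cube d1) (I2 : Cube d2) : ℂ :=
  (volume (I1.carrier ×ˢ I2.carrier)).toReal⁻¹ • ∫ x in I1.carrier ×ˢ I2.carrier, b x

/-- The bi-parameter oscillation `osc^{1,1}(b, I1 × I2)`. -/
def osc11 {d1 d2 : ℕ} (b : Euc d1 × Euc d2 → ℂ) (I1 : Cube d1) (I2 : Cube d2) : ℝ :=
  ∫ x in I1.carrier ×ˢ I2.carrier,
    ‖b x - avgFst b I1 x.2 - avgSnd b I2 x.1 + avgRect b I1 I2‖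

/-- The `L^p` "norm" (with exponent `p ∈ [1,∞]`) of an `ℝ≥0∞`-valued function. -/
def lpNormENN {α : Type*} [MeasurableSpace α] (μ : Measure α) (p : ℝ≥0∞) (g : α → ℝ≥0∞) : ℝ≥0∞ :=
  if p = ∞ then essSup g μ else (∫⁻ x, g x ^ p.toReal ∂μ) ^ (1 / p.toReal)

/-- The mixed norm `‖F‖_{L^{v1}_{x1} L^{v2}_{x2}}`. -/
def mixedNorm {d1 d2 : ℕ} {E : Type*} [NormedAddCommGroup E] (v1 v2 : ℝ≥0∞)
    (F : Euc d1 × Euc d2 → E) : ℝ≥0∞ :=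
  lpNormENN volume v1 (fun x1 => lpNormENN volume v2 (fun x2 => (‖F (x1, x2)‖₊ : ℝ≥0∞)))

/-- The oscillation `osc^{v1,v2}(b, I1 × I2)` with general mixed exponents. -/
def oscMixed {d1 d2 : ℕ} (v1 v2 : ℝ≥0∞) (b : Euc d1 × Euc d2 → ℂ)
    (I1 : Cube d1) (I2 : Cube d2) : ℝ≥0∞ :=
  mixedNorm v1 v2 ((I1.carrier ×ˢ I2.carrier).indicator
    (fun x => b x - avgFst b I1 x.2 - avgSnd b I2 x.1 + avgRect b I1 I2))

/-- A standard Calderón–Zygmund kernel on `ℝ^n` with exponent `α` and constant `CK`. -/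
def IsCZKernel (n : ℕ) (α CK : ℝ) (K : Euc n → Euc n → ℂ) : Prop :=
  (∀ x y : Euc n, x ≠ y → ‖K x y‖ ≤ CK / dist x y ^ (n : ℝ)) ∧
  (∀ x x' y : Euc n, x ≠ y → dist x x' ≤ dist x y / 2 →
    ‖K x y - K x' y‖ + ‖K y x - K y x'‖ ≤ CK * dist x x' ^ α / dist x y ^ ((n : ℝ) + α))

/-- Symmetric non-degeneracy of a kernel with constant `c₀`. -/
def SymNonDeg (n : ℕ) (c₀ : ℝ) (K : Euc n → Euc n → ℂ) : Prop :=
  ∀ (y : Euc n) (r : ℝ), 0 < r → ∃ x : Euc n, r ≤ dist x y ∧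
    1 / (c₀ * r ^ (n : ℝ)) ≤ ‖K x y‖ ∧ 1 / (c₀ * r ^ (n : ℝ)) ≤ ‖K y x‖

/-- Distance between two sets in a metric space. -/
def setDist {α : Type*} [PseudoMetricSpace α] (s t : Set α) : ℝ :=
  sInf (Set.image2 dist s t)

/-- An admissible configuration: the rectangles `J1 × J2` and `L1 × L2` have matching side
lengths in each parameter, and separation comparable to the common side length, with
comparability constants `c1 ≤ c2`. -/
def IsAdmissible {d1 d2 : ℕ} (c1 c2 : ℝ) (J1 L1 : Cube d1) (J2 L2 : Cube d2) : Prop :=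
  J1.side = L1.side ∧ J2.side = L2.side ∧
  c1 * J1.side ≤ setDist J1.carrier L1.carrier ∧ setDist J1.carrier L1.carrier ≤ c2 * J1.side ∧
  c1 * J2.side ≤ setDist J2.carrier L2.carrier ∧ setDist J2.carrier L2.carrier ≤ c2 * J2.side

/-- The difference `B(x,y) = b(x1,x2) − b(x1,y2) − b(y1,x2) + b(y1,y2)`. -/
def biB {d1 d2 : ℕ} (b : Euc d1 × Euc d2 → ℂ) (x y : Euc d1 × Euc d2) : ℂ :=
  b (x.1, x.2) - b (x.1, y.2) - b (y.1, x.2) + b (y.1, y.2)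

/-- The bilinear form `Λ(f1, f2) = ∬ B(x,y) K1(x1,y1) K2(x2,y2) f1(y) f2(x) dy dx`. -/
def biCommForm {d1 d2 : ℕ} (b : Euc d1 × Euc d2 → ℂ) (K1 : Euc d1 → Euc d1 → ℂ)
    (K2 : Euc d2 → Euc d2 → ℂ) (f1 f2 : Euc d1 × Euc d2 → ℂ) : ℂ :=
  ∫ x : Euc d1 × Euc d2, ∫ y : Euc d1 × Euc d2,
    biB b x y * K1 x.1 y.1 * K2 x.2 y.2 * f1 y * f2 x

/-! ### Cubes -/

lemma Cube.carrier_eq {d : ℕ} (I : Cube d) :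
    I.carrier = (@WithLp.ofLp 2 (Fin d → ℝ)) ⁻¹'
      Icc (fun i => I.center i - I.side / 2) (fun i => I.center i + I.side / 2) := by
  ext x
  simp only [Cube.carrier, mem_ofPred_eq, mem_preimage, mem_Icc, Pi.le_def, abs_le, ← forall_and]
  refine forall_congr' fun i => ?_
  constructor <;> rintro ⟨h1, h2⟩ <;> constructor <;> linarith

lemma Cube.isCompact {d : ℕ} (I : Cube d) : IsCompact I.carrier := by
  rw [I.carrier_eq]
  exact (PiLp.homeomorph 2 (fun _ : Fin d => ℝ)).isCompact_preimage.2 isCompact_Icc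

lemma Cube.measurableSet {d : ℕ} (I : Cube d) : MeasurableSet I.carrier :=
  I.isCompact.measurableSet

lemma Cube.volume_eq {d : ℕ} (I : Cube d) : volume I.carrier = ENNReal.ofReal (I.side ^ d) := by
  rw [I.carrier_eq, (PiLp.volume_preserving_ofLp (Fin d)).measure_preimage
    measurableSet_Icc.nullMeasurableSet, Real.volume_Icc_pi]
  have : ∀ i : Fin d, I.center i + I.side / 2 - (I.center i - I.side / 2) = I.side := by
    intro i; ring
  simp [this, ENNReal.ofReal_pow I.side_pos.le]

lemma Cube.toReal_volume {d : ℕ} (I : Cube d) : (volume I.carrier).toReal = I.side ^ d := by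
  rw [I.volume_eq, ENNReal.toReal_ofReal (pow_nonneg I.side_pos.le _)]

lemma Cube.toReal_volume_pos {d : ℕ} (I : Cube d) : 0 < (volume I.carrier).toReal := by
  rw [I.toReal_volume]; exact pow_pos I.side_pos _

lemma toReal_volume_rect {d1 d2 : ℕ} (I1 : Cube d1) (I2 : Cube d2) :
    (volume (I1.carrier ×ˢ I2.carrier)).toReal
      = (volume I1.carrier).toReal * (volume I2.carrier).toReal := by
  rw [Measure.volume_eq_prod, Measure.prod_prod, ENNReal.toReal_mul]

lemma Cube.center_mem {d : ℕ} (I : Cube d) : I.center ∈ I.carrier := by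
  intro i; simpa using by linarith [I.side_pos]

lemma abs_coord_sub_le {d : ℕ} (x y : Euc d) (i : Fin d) : |x i - y i| ≤ dist x y := by
  simpa [dist_eq_norm] using PiLp.norm_apply_le (p := 2) (x - y) i

lemma Cube.dist_le {d : ℕ} (I : Cube d) {x y : Euc d} (hx : x ∈ I.carrier) (hy : y ∈ I.carrier) :
    dist x y ≤ Real.sqrt d * I.side := by
  rw [EuclideanSpace.dist_eq]
  calc Real.sqrt (∑ i, dist (x i) (y i) ^ 2) ≤ Real.sqrt (∑ _i : Fin d, I.side ^ 2) := by
        refine Real.sqrt_le_sqrt (Finset.sum_le_sum fun i _ => ?_)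
        refine pow_le_pow_left₀ dist_nonneg ?_ 2
        have h1 := abs_le.1 (hx i)
        have h2 := abs_le.1 (hy i)
        rw [Real.dist_eq, abs_le]
        constructor <;> linarith
    _ = Real.sqrt d * I.side := by
        simp [Real.sqrt_sq I.side_pos.le]

/-! ### Campanato's argument for maps into a metric space -/

/-- If `f` is on average `S ℓ(I)^α`-close to a point `a I` on every cube `I`, then the points
attached to a cube and to a subcube of half its side are close: both are close, on average, to the
same value of `f` on the subcube. -/
lemma dist_anchor_le {d : ℕ} {X : Type*} [PseudoMetricSpace X] {f : Euc d → X}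
    (hf : Continuous f) {a : Cube d → X} {α S : ℝ} (hα : 0 < α) (hS : 0 ≤ S)
    (h : ∀ I : Cube d, ∫ x in I.carrier, dist (f x) (a I)
      ≤ S * I.side ^ α * (volume I.carrier).toReal)
    (I J : Cube d) (hJI : J.carrier ⊆ I.carrier) (hside : I.side = 2 * J.side) :
    dist (a I) (a J) ≤ (1 + 2 ^ d) * S * I.side ^ α := by
  have hint : ∀ K L : Cube d, IntegrableOn (fun x => dist (f x) (a K)) L.carrier := fun K L =>
    ((hf.dist continuous_const).continuousOn).integrableOn_compact L.isCompact
  have hvol : (volume I.carrier).toReal = 2 ^ d * (volume J.carrier).toReal := by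
    rw [I.toReal_volume, J.toReal_volume, hside, mul_pow]
  have hpos := J.toReal_volume_pos
  have hJ := h J
  have hI : ∫ x in J.carrier, dist (f x) (a I) ≤ S * I.side ^ α * (volume I.carrier).toReal :=
    (setIntegral_mono_set (hint I I) (Filter.Eventually.of_forall fun x => dist_nonneg)
      hJI.eventuallyLE).trans (h I)
  have hmono : S * J.side ^ α ≤ S * I.side ^ α := by
    refine mul_le_mul_of_nonneg_left (Real.rpow_le_rpow J.side_pos.le ?_ hα.le) hS
    linarith [J.side_pos]
  have hsum : ∫ x in J.carrier, (dist (f x) (a I) + dist (f x) (a J))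
      ≤ (1 + 2 ^ d) * S * I.side ^ α * (volume J.carrier).toReal := by
    rw [integral_add (hint I J) (hint J J)]
    rw [hvol] at hI
    have := mul_le_mul_of_nonneg_right hmono hpos.le
    nlinarith
  have hconst : ∫ _x in J.carrier, dist (a I) (a J)
      ≤ ∫ x in J.carrier, (dist (f x) (a I) + dist (f x) (a J)) := by
    refine integral_mono (by
      have := J.isCompact.measure_lt_top (μ := volume)
      exact integrableOn_const this.ne) ((hint I J).add (hint J J)) fun x => ?_
    exact dist_triangle_left _ _ _
  rw [setIntegral_const, smul_eq_mul, Measure.real, mul_comm] at hconst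
  exact le_of_mul_le_mul_right (hconst.trans hsum) hpos

/-- The cube centered at `x` with side `2^{-k} s`. -/
def dyadicCube {d : ℕ} (x : Euc d) (s : ℝ) (hs : 0 < s) (k : ℕ) : Cube d :=
  ⟨x, s * (1 / 2) ^ k, by positivity⟩

/-- The points attached to cubes shrinking to `x` converge to `f x`, since each cube contains
a point where `f` is at most as far from the attached point as on average. -/
lemma tendsto_anchor {d : ℕ} {X : Type*} [PseudoMetricSpace X] {f : Euc d → X}
    (hf : Continuous f) {a : Cube d → X} {α S : ℝ} (hα : 0 < α)
    (h : ∀ I : Cube d, ∫ x in I.carrier, dist (f x) (a I)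
      ≤ S * I.side ^ α * (volume I.carrier).toReal)
    (x : Euc d) (s : ℝ) (hs : 0 < s) :
    Filter.Tendsto (fun k => a (dyadicCube x s hs k)) Filter.atTop (nhds (f x)) := by
  have key : ∀ I : Cube d, ∃ z ∈ I.carrier, dist (f z) (a I) ≤ S * I.side ^ α := by
    intro I
    have hpos := I.toReal_volume_pos
    obtain ⟨z, hz, hle⟩ := exists_le_setAverage (μ := volume) (s := I.carrier)
      (f := fun z => dist (f z) (a I)) (fun h0 => by simp [h0] at hpos)
      I.isCompact.measure_lt_top.ne
      (((hf.dist continuous_const).continuousOn).integrableOn_compact I.isCompact)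
    refine ⟨z, hz, hle.trans ?_⟩
    rw [setAverage_eq, smul_eq_mul, Measure.real, inv_mul_le_iff₀ hpos, mul_comm _ (S * _)]
    exact h I
  choose z hz hle using key
  have hsides : Filter.Tendsto (fun k => (dyadicCube x s hs k).side) Filter.atTop (nhds 0) := by
    simpa [dyadicCube] using
      (tendsto_pow_atTop_nhds_zero_of_lt_one (r := (1 / 2 : ℝ)) (by norm_num)
        (by norm_num)).const_mul s
  have hzx : Filter.Tendsto (fun k => z (dyadicCube x s hs k)) Filter.atTop (nhds x) := by
    rw [tendsto_iff_dist_tendsto_zero]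
    refine squeeze_zero (fun _ => dist_nonneg)
      (fun k => (dyadicCube x s hs k).dist_le (hz _) (dyadicCube x s hs k).center_mem) ?_
    simpa using hsides.const_mul (Real.sqrt d)
  have hfz : Filter.Tendsto (fun k => dist (f (z (dyadicCube x s hs k))) (f x)) Filter.atTop
      (nhds 0) := tendsto_iff_dist_tendsto_zero.1 ((hf.tendsto x).comp hzx)
  rw [tendsto_iff_dist_tendsto_zero]
  refine squeeze_zero (fun _ => dist_nonneg)
    (fun k => (dist_triangle_left _ _ (f (z (dyadicCube x s hs k)))).trans
      (add_le_add_left (hle _) _)) ?_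
  have hp : Filter.Tendsto (fun k => S * (dyadicCube x s hs k).side ^ α) Filter.atTop
      (nhds (S * 0 ^ α)) :=
    (((Real.continuousAt_rpow_const 0 α (Or.inr hα.le)).tendsto).comp hsides).const_mul S
  rw [Real.zero_rpow hα.ne', mul_zero] at hp
  simpa using hp.add hfz

lemma dist_anchor_self_le {d : ℕ} {X : Type*} [PseudoMetricSpace X] {f : Euc d → X}
    (hf : Continuous f) {a : Cube d → X} {α S : ℝ} (hα : 0 < α) (hS : 0 ≤ S)
    (h : ∀ I : Cube d, ∫ x in I.carrier, dist (f x) (a I)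
      ≤ S * I.side ^ α * (volume I.carrier).toReal)
    (x : Euc d) (s : ℝ) (hs : 0 < s) :
    dist (a (dyadicCube x s hs 0)) (f x)
      ≤ (1 + 2 ^ d) * S * s ^ α / (1 - (1 / 2) ^ α) := by
  refine dist_le_of_le_geometric_of_tendsto₀ (f := fun k => a (dyadicCube x s hs k))
    ((1 / 2) ^ α) _ (Real.rpow_lt_one (by norm_num) (by norm_num) hα) (fun k => ?_)
    (tendsto_anchor hf hα h x s hs)
  refine (dist_anchor_le hf hα hS h _ _ ?_ ?_).trans_eq ?_
  · intro y hy i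
    refine (hy i).trans ?_
    simp only [dyadicCube, pow_succ]
    have : 0 < s * (1 / 2) ^ k := by positivity
    linarith
  · simp only [dyadicCube, pow_succ]; ring
  · simp only [dyadicCube]
    rw [Real.mul_rpow hs.le (by positivity), Real.rpow_pow_comm (by norm_num)]
    ring

/-- The constant in Campanato's embedding. -/
def campanatoConst (d : ℕ) (α : ℝ) : ℝ :=
  (1 + 2 ^ d) * 4 ^ α * (1 + 2 / (1 - (1 / 2) ^ α))

lemma one_le_campanatoConst (d : ℕ) {α : ℝ} (hα : 0 < α) : 1 ≤ campanatoConst d α := by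
  have h1 : (1 / 2 : ℝ) ^ α < 1 := Real.rpow_lt_one (by norm_num) (by norm_num) hα
  have h2 : (1 : ℝ) ≤ 4 ^ α := Real.one_le_rpow (by norm_num) hα.le
  have h3 : 0 ≤ 2 / (1 - (1 / 2 : ℝ) ^ α) := div_nonneg (by norm_num) (by linarith)
  have h4 : (0 : ℝ) ≤ 2 ^ d := by positivity
  unfold campanatoConst
  exact one_le_mul_of_one_le_of_one_le
    (one_le_mul_of_one_le_of_one_le (by linarith) h2) (by linarith)

/-- Campanato's embedding for continuous metric-space-valued maps: mean oscillation of order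
`ℓ(I)^α` around arbitrary points `a I` forces Hölder continuity of order `α`. -/
lemma campanato {d : ℕ} {X : Type*} [PseudoMetricSpace X] {f : Euc d → X}
    (hf : Continuous f) {a : Cube d → X} {α S : ℝ} (hα : 0 < α) (hS : 0 ≤ S)
    (h : ∀ I : Cube d, ∫ x in I.carrier, dist (f x) (a I)
      ≤ S * I.side ^ α * (volume I.carrier).toReal)
    {x y : Euc d} (hxy : x ≠ y) :
    dist (f x) (f y) ≤ campanatoConst d α * S * dist x y ^ α := by
  have hr : 0 < dist x y := dist_pos.2 hxy
  have h4 : 0 < 4 * dist x y := by positivity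
  have h2 : 0 < 2 * dist x y := by positivity
  have hx := dist_anchor_self_le hf hα hS h x _ h4
  have hy := dist_anchor_self_le hf hα hS h y _ h2
  have hxy' := dist_anchor_le hf hα hS h (dyadicCube x _ h4 0) (dyadicCube y _ h2 0) (by
    intro z hz i
    have h1 := hz i
    have h3 := abs_coord_sub_le x y i
    simp only [dyadicCube, pow_zero, mul_one] at h1 ⊢
    rw [abs_le] at *
    constructor <;> linarith) (by simp only [dyadicCube]; ring)
  have hden : 0 < 1 - (1 / 2 : ℝ) ^ α := by
    linarith [Real.rpow_lt_one (x := 1 / 2) (by norm_num) (by norm_num) hα]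
  have hy' : (1 + 2 ^ d) * S * (2 * dist x y) ^ α / (1 - (1 / 2) ^ α)
      ≤ (1 + 2 ^ d) * S * (4 * dist x y) ^ α / (1 - (1 / 2) ^ α) := by
    have : (2 * dist x y) ^ α ≤ (4 * dist x y) ^ α :=
      Real.rpow_le_rpow h2.le (by linarith) hα.le
    gcongr
  have hside : (dyadicCube x _ h4 0).side = 4 * dist x y := by simp [dyadicCube]
  rw [hside] at hxy'
  have htri := dist_triangle4 (f x) (a (dyadicCube x _ h4 0)) (a (dyadicCube y _ h2 0)) (f y)
  rw [dist_comm (f x) (a _)] at htri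
  have hC : campanatoConst d α * S * dist x y ^ α
      = (1 + 2 ^ d) * S * (4 * dist x y) ^ α
        + 2 * ((1 + 2 ^ d) * S * (4 * dist x y) ^ α / (1 - (1 / 2) ^ α)) := by
    rw [campanatoConst, Real.mul_rpow (by norm_num) hr.le]
    ring
  rw [hC]
  linarith

/-! ### Averages of a continuous function on a product -/

section Averages

variable {d1 d2 : ℕ} {b : Euc d1 × Euc d2 → ℂ}

lemma continuous_avgSnd (hb : Continuous b) (I2 : Cube d2) : Continuous (avgSnd b I2) := by
  unfold avgSnd
  exact (continuous_parametric_integral_of_continuous (μ := volume)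
    (f := fun x1 y2 => b (x1, y2))
    (by exact hb) I2.isCompact).const_smul (_ : ℝ)

lemma continuous_avgFst (hb : Continuous b) (I1 : Cube d1) : Continuous (avgFst b I1) := by
  unfold avgFst
  exact (continuous_parametric_integral_of_continuous (μ := volume)
    (f := fun x2 y1 => b (y1, x2))
    (by exact hb.comp continuous_swap) I1.isCompact).const_smul (_ : ℝ)

lemma integrableOn_rect {E : Type*} [NormedAddCommGroup E] {g : Euc d1 × Euc d2 → E}
    (hg : Continuous g) (I1 : Cube d1) (I2 : Cube d2) :
    IntegrableOn g (I1.carrier ×ˢ I2.carrier) :=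
  hg.continuousOn.integrableOn_compact (I1.isCompact.prod I2.isCompact)

lemma integrableOn_cube {d : ℕ} {E : Type*} [NormedAddCommGroup E] {g : Euc d → E}
    (hg : Continuous g) (I : Cube d) : IntegrableOn g I.carrier :=
  hg.continuousOn.integrableOn_compact I.isCompact

lemma cubeAvg_sub_slices (hb : Continuous b) (I2 : Cube d2) (x1 y1 : Euc d1) :
    cubeAvg (fun x2 => b (x1, x2) - b (y1, x2)) I2 = avgSnd b I2 x1 - avgSnd b I2 y1 := by
  unfold cubeAvg avgSnd
  rw [integral_sub (integrableOn_cube (by fun_prop) I2) (integrableOn_cube (by fun_prop) I2),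
    smul_sub]

lemma avgRect_eq (hb : Continuous b) (I1 : Cube d1) (I2 : Cube d2) :
    avgRect b I1 I2 = (volume I1.carrier).toReal⁻¹ • ∫ y1 in I1.carrier, avgSnd b I2 y1 := by
  unfold avgRect avgSnd
  rw [toReal_volume_rect, integral_smul, smul_smul, mul_inv]
  congr 1
  exact setIntegral_prod _ (integrableOn_rect hb I1 I2)

lemma osc11_eq (hb : Continuous b) (I1 : Cube d1) (I2 : Cube d2) :
    osc11 b I1 I2 = ∫ x1 in I1.carrier, ∫ x2 in I2.carrier,
      ‖b (x1, x2) - avgFst b I1 x2 - avgSnd b I2 x1 + avgRect b I1 I2‖ := by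
  unfold osc11
  have h1 := continuous_avgFst hb I1
  have h2 := continuous_avgSnd hb I2
  exact setIntegral_prod _ (integrableOn_rect (by fun_prop) I1 I2)

/-- The mixed oscillation is an average, over the second point `y1`, of the differences
`b(x1,·) - b(y1,·)` with their mean over `I2` removed. -/
lemma mixed_eq_average (hb : Continuous b) (I1 : Cube d1) (I2 : Cube d2) (x1 : Euc d1)
    (x2 : Euc d2) :
    b (x1, x2) - avgFst b I1 x2 - avgSnd b I2 x1 + avgRect b I1 I2
      = (volume I1.carrier).toReal⁻¹ • ∫ y1 in I1.carrier,
          ((b (x1, x2) - b (y1, x2)) - (avgSnd b I2 x1 - avgSnd b I2 y1)) := by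
  have h2 := continuous_avgSnd hb I2
  have hpos := I1.toReal_volume_pos
  have hrw : ∀ y1, (b (x1, x2) - b (y1, x2)) - (avgSnd b I2 x1 - avgSnd b I2 y1)
      = (b (x1, x2) - avgSnd b I2 x1) - b (y1, x2) + avgSnd b I2 y1 := fun y1 => by ring
  simp_rw [hrw]
  rw [integral_add (integrableOn_cube (by fun_prop) I1) (integrableOn_cube h2 I1),
    integral_sub (integrableOn_cube (by fun_prop) I1) (integrableOn_cube (by fun_prop) I1),
    setIntegral_const, Measure.real, smul_add, smul_sub, smul_smul, inv_mul_cancel₀ hpos.ne',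
    one_smul, avgRect_eq hb, avgFst]
  ring

/-! ### The two inequalities, for finite suprema -/

/-- Hölder bounds for the differences of slices bound the mixed oscillation. -/
lemma osc11_le (hb : Continuous b) {α H : ℝ} (hα : 0 < α) (hH : 0 ≤ H)
    (h : ∀ (x1 y1 : Euc d1) (I2 : Cube d2), x1 ≠ y1 →
      ∫ x2 in I2.carrier, ‖(b (x1, x2) - b (y1, x2)) - (avgSnd b I2 x1 - avgSnd b I2 y1)‖
        ≤ H * dist x1 y1 ^ α * (volume I2.carrier).toReal)
    (I1 : Cube d1) (I2 : Cube d2) :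
    osc11 b I1 I2 ≤ Real.sqrt d1 ^ α * H * I1.side ^ α
      * ((volume I1.carrier).toReal * (volume I2.carrier).toReal) := by
  have h1 := continuous_avgFst hb I1
  have h2 := continuous_avgSnd hb I2
  have hpos := I1.toReal_volume_pos
  set M := Real.sqrt d1 ^ α * H * I1.side ^ α * (volume I2.carrier).toReal with hM
  have hM0 : 0 ≤ M := by have := I1.side_pos; positivity
  have hpt : ∀ x1 ∈ I1.carrier, ∀ y1 ∈ I1.carrier,
      ∫ x2 in I2.carrier, ‖(b (x1, x2) - b (y1, x2)) - (avgSnd b I2 x1 - avgSnd b I2 y1)‖ ≤ M := by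
    intro x1 hx1 y1 hy1
    by_cases hxy : x1 = y1
    · simpa [hxy] using hM0
    · refine (h x1 y1 I2 hxy).trans ?_
      have : dist x1 y1 ^ α ≤ Real.sqrt d1 ^ α * I1.side ^ α := by
        rw [← Real.mul_rpow (Real.sqrt_nonneg _) I1.side_pos.le]
        exact Real.rpow_le_rpow dist_nonneg (I1.dist_le hx1 hy1) hα.le
      rw [hM, mul_comm (Real.sqrt d1 ^ α) H, mul_assoc H (Real.sqrt d1 ^ α)]
      gcongr
  have hslice : ∀ x1 ∈ I1.carrier, ∫ x2 in I2.carrier,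
      ‖b (x1, x2) - avgFst b I1 x2 - avgSnd b I2 x1 + avgRect b I1 I2‖ ≤ M := by
    intro x1 hx1
    have hG : Continuous (fun p : Euc d2 × Euc d1 =>
        ‖(b (x1, p.1) - b (p.2, p.1)) - (avgSnd b I2 x1 - avgSnd b I2 p.2)‖) := by fun_prop
    calc _ ≤ ∫ x2 in I2.carrier, (volume I1.carrier).toReal⁻¹ * ∫ y1 in I1.carrier,
            ‖(b (x1, x2) - b (y1, x2)) - (avgSnd b I2 x1 - avgSnd b I2 y1)‖ := by
          refine integral_mono (integrableOn_cube (by fun_prop) I2)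
            (integrableOn_cube (continuous_const.mul
              (continuous_parametric_integral_of_continuous (f := fun x2 y1 =>
                ‖(b (x1, x2) - b (y1, x2)) - (avgSnd b I2 x1 - avgSnd b I2 y1)‖)
                hG I1.isCompact)) I2) fun x2 => ?_
          dsimp only
          rw [mixed_eq_average hb, norm_smul, Real.norm_of_nonneg (inv_nonneg.2 hpos.le)]
          gcongr
          exact norm_integral_le_integral_norm _
      _ = (volume I1.carrier).toReal⁻¹ * ∫ y1 in I1.carrier, ∫ x2 in I2.carrier,
            ‖(b (x1, x2) - b (y1, x2)) - (avgSnd b I2 x1 - avgSnd b I2 y1)‖ := by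
          rw [integral_const_mul]
          congr 1
          refine integral_integral_swap ?_
          rw [Measure.prod_restrict]
          exact integrableOn_rect hG I2 I1
      _ ≤ (volume I1.carrier).toReal⁻¹ * ∫ _y1 in I1.carrier, M := by
          refine mul_le_mul_of_nonneg_left ?_ (inv_nonneg.2 hpos.le)
          refine setIntegral_mono_on (integrableOn_cube ?_ I1)
            (integrableOn_const I1.isCompact.measure_lt_top.ne) I1.measurableSet (hpt x1 hx1)
          exact continuous_parametric_integral_of_continuous (f := fun y1 x2 =>
                ‖(b (x1, x2) - b (y1, x2)) - (avgSnd b I2 x1 - avgSnd b I2 y1)‖)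
                (hG.comp continuous_swap) I2.isCompact
      _ = M := by
          rw [setIntegral_const, Measure.real, smul_eq_mul, ← mul_assoc,
            inv_mul_cancel₀ hpos.ne', one_mul]
  rw [osc11_eq hb]
  calc _ ≤ ∫ _x1 in I1.carrier, M := by
        refine setIntegral_mono_on (integrableOn_cube ?_ I1)
            (integrableOn_const I1.isCompact.measure_lt_top.ne) I1.measurableSet hslice
        exact continuous_parametric_integral_of_continuous (f := fun x1 x2 =>
          ‖b (x1, x2) - avgFst b I1 x2 - avgSnd b I2 x1 + avgRect b I1 I2‖)
          (by change Continuous (fun p : Euc d1 × Euc d2 => _); fun_prop) I2.isCompact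
    _ = _ := by
        rw [setIntegral_const, Measure.real, smul_eq_mul, hM]
        ring

lemma dist_toL1_eq {Ω : Type*} [MeasurableSpace Ω] {μ : Measure Ω} {f g : Ω → ℂ}
    (hf : Integrable f μ) (hg : Integrable g μ) :
    dist (hf.toL1 f) (hg.toL1 g) = ∫ x, ‖f x - g x‖ ∂μ := by
  rw [dist_eq_norm, ← Integrable.toL1_sub, L1.norm_of_fun_eq_integral_norm]
  rfl

/-- Bounds for the mixed oscillation give Hölder bounds for the differences of slices: apply
`campanato` in `L¹(I2)` to the slices `b(x1,·)` with their mean over `I2` removed, the point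
attached to `I1` being `⟨b⟩_{I1,1} - ⟨b⟩_{I1×I2}`. -/
lemma slice_diff_le (hb : Continuous b) {α S : ℝ} (hα : 0 < α) (hS : 0 ≤ S)
    (I2 : Cube d2)
    (h : ∀ I1 : Cube d1, osc11 b I1 I2
      ≤ S * I1.side ^ α * ((volume I1.carrier).toReal * (volume I2.carrier).toReal))
    {x1 y1 : Euc d1} (hxy : x1 ≠ y1) :
    ∫ x2 in I2.carrier, ‖(b (x1, x2) - b (y1, x2)) - (avgSnd b I2 x1 - avgSnd b I2 y1)‖
      ≤ campanatoConst d1 α * S * dist x1 y1 ^ α * (volume I2.carrier).toReal := by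
  have h2 := continuous_avgSnd hb I2
  have hF : ∀ x1, Integrable (fun x2 => b (x1, x2) - avgSnd b I2 x1)
      (volume.restrict I2.carrier) := fun x1 => integrableOn_cube (by fun_prop) I2
  have hA : ∀ I1 : Cube d1, Integrable (fun x2 => avgFst b I1 x2 - avgRect b I1 I2)
      (volume.restrict I2.carrier) := fun I1 =>
    integrableOn_cube ((continuous_avgFst hb I1).sub continuous_const) I2
  let f : Euc d1 → (Euc d2 →₁[volume.restrict I2.carrier] ℂ) := fun x1 => (hF x1).toL1 _
  let a : Cube d1 → (Euc d2 →₁[volume.restrict I2.carrier] ℂ) := fun I1 => (hA I1).toL1 _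
  have hdist : ∀ x1 y1, dist (f x1) (f y1) = ∫ x2 in I2.carrier,
      ‖(b (x1, x2) - avgSnd b I2 x1) - (b (y1, x2) - avgSnd b I2 y1)‖ := fun x1 y1 =>
    dist_toL1_eq _ _
  have hf : Continuous f := by
    refine continuous_iff_continuousAt.2 fun x0 => tendsto_iff_dist_tendsto_zero.2 ?_
    simp_rw [hdist]
    have hc : Continuous (fun x1 => ∫ x2 in I2.carrier,
        ‖(b (x1, x2) - avgSnd b I2 x1) - (b (x0, x2) - avgSnd b I2 x0)‖) :=
      continuous_parametric_integral_of_continuous (f := fun x1 x2 =>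
        ‖(b (x1, x2) - avgSnd b I2 x1) - (b (x0, x2) - avgSnd b I2 x0)‖)
        (by change Continuous (fun p : Euc d1 × Euc d2 => _); fun_prop) I2.isCompact
    simpa using hc.tendsto x0
  have hosc : ∀ I1 : Cube d1, ∫ x in I1.carrier, dist (f x) (a I1)
      ≤ (S * (volume I2.carrier).toReal) * I1.side ^ α * (volume I1.carrier).toReal := by
    intro I1
    have : ∫ x in I1.carrier, dist (f x) (a I1) = osc11 b I1 I2 := by
      rw [osc11_eq hb]
      congr 1 with x
      rw [dist_toL1_eq]
      congr 1 with x2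
      congr 1
      ring
    rw [this]
    exact (h I1).trans_eq (by ring)
  have := campanato hf hα (mul_nonneg hS I2.toReal_volume_pos.le) hosc hxy
  rw [hdist] at this
  refine (le_of_eq ?_).trans (this.trans_eq (by ring))
  congr 1 with x2
  congr 1
  ring

end Averages

theorem statement5 (d1 d2 : ℕ) (hd1 : 1 ≤ d1) (hd2 : 1 ≤ d2) (α : ℝ) (hα : 0 < α) :
    ∃ C : ℝ, 1 ≤ C ∧ ∀ b : Euc d1 × Euc d2 → ℂ, Continuous b →
      (ENNReal.ofReal C)⁻¹ *
          (⨆ (I1 : Cube d1) (I2 : Cube d2), ENNReal.ofReal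
            ((I1.side ^ α)⁻¹ * (volume (I1.carrier ×ˢ I2.carrier)).toReal⁻¹ * osc11 b I1 I2))
        ≤ (⨆ (x1 : Euc d1) (y1 : Euc d1) (_ : x1 ≠ y1),
            (ENNReal.ofReal (dist x1 y1 ^ α))⁻¹ * bmoNorm (fun x2 => b (x1, x2) - b (y1, x2))) ∧
      (⨆ (x1 : Euc d1) (y1 : Euc d1) (_ : x1 ≠ y1),
          (ENNReal.ofReal (dist x1 y1 ^ α))⁻¹ * bmoNorm (fun x2 => b (x1, x2) - b (y1, x2)))
        ≤ ENNReal.ofReal C *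
          (⨆ (I1 : Cube d1) (I2 : Cube d2), ENNReal.ofReal
            ((I1.side ^ α)⁻¹ * (volume (I1.carrier ×ˢ I2.carrier)).toReal⁻¹ * osc11 b I1 I2)) := by
  have hC2 := one_le_campanatoConst d1 hα
  have hC1 : 0 ≤ Real.sqrt d1 ^ α := by positivity
  refine ⟨Real.sqrt d1 ^ α + campanatoConst d1 α, by linarith, fun b hb => ?_⟩
  set C := Real.sqrt d1 ^ α + campanatoConst d1 α with hC
  have hCpos : 0 < C := by linarith
  have hC0 : ENNReal.ofReal C ≠ 0 := (ENNReal.ofReal_pos.2 hCpos).ne'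
  constructor
  · rw [ENNReal.inv_mul_le_iff hC0 ENNReal.ofReal_ne_top]
    set T := ⨆ (x1 : Euc d1) (y1 : Euc d1) (_ : x1 ≠ y1),
            (ENNReal.ofReal (dist x1 y1 ^ α))⁻¹ * bmoNorm (fun x2 => b (x1, x2) - b (y1, x2))
      with hT
    by_cases hTtop : T = ∞
    · rw [hTtop, ENNReal.mul_top hC0]; exact le_top
    have hH : ∀ (x1 y1 : Euc d1) (I2 : Cube d2), x1 ≠ y1 →
        ∫ x2 in I2.carrier, ‖(b (x1, x2) - b (y1, x2)) - (avgSnd b I2 x1 - avgSnd b I2 y1)‖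
          ≤ T.toReal * dist x1 y1 ^ α * (volume I2.carrier).toReal := by
      intro x1 y1 I2 hxy
      have hr : 0 < dist x1 y1 ^ α := Real.rpow_pos_of_pos (dist_pos.2 hxy) _
      have hle : (ENNReal.ofReal (dist x1 y1 ^ α))⁻¹ *
          bmoNorm (fun x2 => b (x1, x2) - b (y1, x2)) ≤ T :=
        le_iSup_of_le x1 (le_iSup_of_le y1 (le_iSup_of_le hxy le_rfl))
      rw [ENNReal.inv_mul_le_iff (ENNReal.ofReal_pos.2 hr).ne' ENNReal.ofReal_ne_top,
        ← ENNReal.ofReal_toReal hTtop, ← ENNReal.ofReal_mul hr.le] at hle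
      have hI := (le_iSup (fun I : Cube d2 => ENNReal.ofReal ((volume I.carrier).toReal⁻¹ *
        ∫ x in I.carrier, ‖(b (x1, x) - b (y1, x)) -
          cubeAvg (fun x2 => b (x1, x2) - b (y1, x2)) I‖)) I2).trans hle
      rw [ENNReal.ofReal_le_ofReal_iff (mul_nonneg hr.le ENNReal.toReal_nonneg),
        cubeAvg_sub_slices hb, inv_mul_le_iff₀ I2.toReal_volume_pos] at hI
      exact hI.trans_eq (by ring)
    refine iSup_le fun I1 => iSup_le fun I2 => ?_
    rw [← ENNReal.ofReal_toReal hTtop, ← ENNReal.ofReal_mul hCpos.le]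
    refine ENNReal.ofReal_le_ofReal ?_
    have hs : 0 < I1.side ^ α := Real.rpow_pos_of_pos I1.side_pos _
    have hv : 0 < (volume I1.carrier).toReal * (volume I2.carrier).toReal :=
      mul_pos I1.toReal_volume_pos I2.toReal_volume_pos
    rw [toReal_volume_rect, ← mul_inv, inv_mul_le_iff₀ (mul_pos hs hv)]
    refine (osc11_le hb hα ENNReal.toReal_nonneg hH I1 I2).trans ?_
    have : Real.sqrt d1 ^ α * T.toReal ≤ C * T.toReal :=
      mul_le_mul_of_nonneg_right (by linarith) ENNReal.toReal_nonneg
    have := mul_le_mul_of_nonneg_right this (mul_pos hs hv).le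
    linarith
  · set T := ⨆ (I1 : Cube d1) (I2 : Cube d2), ENNReal.ofReal
            ((I1.side ^ α)⁻¹ * (volume (I1.carrier ×ˢ I2.carrier)).toReal⁻¹ * osc11 b I1 I2)
      with hT
    by_cases hTtop : T = ∞
    · rw [hTtop, ENNReal.mul_top hC0]; exact le_top
    have hS : ∀ (I2 : Cube d2) (I1 : Cube d1), osc11 b I1 I2
        ≤ T.toReal * I1.side ^ α * ((volume I1.carrier).toReal * (volume I2.carrier).toReal) := by
      intro I2 I1
      have hs : 0 < I1.side ^ α := Real.rpow_pos_of_pos I1.side_pos _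
      have hv : 0 < (volume I1.carrier).toReal * (volume I2.carrier).toReal :=
        mul_pos I1.toReal_volume_pos I2.toReal_volume_pos
      have hle : ENNReal.ofReal ((I1.side ^ α)⁻¹ *
          (volume (I1.carrier ×ˢ I2.carrier)).toReal⁻¹ * osc11 b I1 I2) ≤ T :=
        le_iSup_of_le I1 (le_iSup_of_le I2 le_rfl)
      rw [← ENNReal.ofReal_toReal hTtop, ENNReal.ofReal_le_ofReal_iff ENNReal.toReal_nonneg,
        toReal_volume_rect, ← mul_inv, inv_mul_le_iff₀ (mul_pos hs hv)] at hle
      exact hle.trans_eq (by ring)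
    refine iSup_le fun x1 => iSup_le fun y1 => iSup_le fun hxy => ?_
    have hr : 0 < dist x1 y1 ^ α := Real.rpow_pos_of_pos (dist_pos.2 hxy) _
    rw [ENNReal.inv_mul_le_iff (ENNReal.ofReal_pos.2 hr).ne' ENNReal.ofReal_ne_top]
    refine iSup_le fun I2 => ?_
    rw [← ENNReal.ofReal_toReal hTtop, ← ENNReal.ofReal_mul hCpos.le, ← ENNReal.ofReal_mul hr.le]
    refine ENNReal.ofReal_le_ofReal ?_
    rw [cubeAvg_sub_slices hb, inv_mul_le_iff₀ I2.toReal_volume_pos]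
    refine (slice_diff_le hb hα ENNReal.toReal_nonneg I2 (hS I2) hxy).trans ?_
    have : campanatoConst d1 α * T.toReal ≤ C * T.toReal :=
      mul_le_mul_of_nonneg_right (by linarith) ENNReal.toReal_nonneg
    have := mul_le_mul_of_nonneg_right this (mul_pos hr I2.toReal_volume_pos).le
    linarith
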